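/- For every permutation w ∈ S_n, the Newton polytope of the Schubert polynomial 𝔖_w equals the Minkowski sum of Schubert matroid polytopes Σ_{j=1}^n P(SM_n(D(w)_j)), where D(w)_j = {i : (i,j) ∈ D(w)} are the columns of the Rothe diagram of w. -/

import Mathlib

open Finset MvPolynomial Pointwise

/-- `DomLE R S`: `R` and `S` have the same cardinality and, for each `k`, the `k`-th least
element of `R` does not exceed the `k`-th least element of `S`.  The bases of the Schubert
matroid `SM_n(S)` are exactly the `B` with `DomLE B S`. -/
def DomLE {α : Type*} [LinearOrder α] (R S : Finset α) : Prop :=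
  R.card = S.card ∧
    ∀ (k : ℕ) (hR : k < (R.sort (· ≤ ·)).length) (hS : k < (S.sort (· ≤ ·)).length),
      (R.sort (· ≤ ·)).get ⟨k, hR⟩ ≤ (S.sort (· ≤ ·)).get ⟨k, hS⟩

/-- Indicator vector `ζ^B ∈ {0,1}^n ⊆ ℝ^n` of a subset `B ⊆ [n]`. -/
def indVec {n : ℕ} (B : Finset (Fin n)) : Fin n → ℝ := fun i => if i ∈ B then 1 else 0

/-- Matroid polytope `P(SM_n(S))` of the Schubert matroid `SM_n(S)`: the convex hull in
`ℝ^n` of the indicator vectors of its bases, i.e. of the `B` with `B ≤ S`. -/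
def smPolytope {n : ℕ} (S : Finset (Fin n)) : Set (Fin n → ℝ) :=
  convexHull ℝ {x | ∃ B : Finset (Fin n), DomLE B S ∧ x = indVec B}

/-- Auxiliary greedy matching count for a parenthesis word (`true` = '(', `false` = ')'),
given the current number of unmatched open parentheses. -/
def matchedPairsAux : List Bool → ℕ → ℕ
  | [], _ => 0
  | true :: rest, o => matchedPairsAux rest (o + 1)
  | false :: rest, 0 => matchedPairsAux rest 0
  | false :: rest, o + 1 => matchedPairsAux rest o + 1

/-- The number of paired `()`'s in a parenthesis word (`true` = '(', `false` = ')'). -/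
def matchedPairs (w : List Bool) : ℕ := matchedPairsAux w 0

/-- Column `j` of a diagram `D ⊆ [n]²`: the set `D_j = {i : (i,j) ∈ D}`. -/
def colSet {n : ℕ} (D : Finset (Fin n × Fin n)) (j : Fin n) : Finset (Fin n) :=
  Finset.univ.filter fun i => (i, j) ∈ D

/-- The parenthesis part of `word_{j,I}(D)`: reading rows `i` from top to bottom, record
'(' (= `true`) if `(i,j) ∉ D` and `i ∈ I`, and ')' (= `false`) if `(i,j) ∈ D` and `i ∉ I`.
(The `⋆`'s, at positions with `(i,j) ∈ D` and `i ∈ I`, play no role in the matching.) -/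
def colWord {n : ℕ} (D : Finset (Fin n × Fin n)) (j : Fin n) (I : Finset (Fin n)) :
    List Bool :=
  (List.finRange n).filterMap fun i =>
    if (i, j) ∈ D then (if i ∈ I then none else some false)
    else (if i ∈ I then some true else none)

/-- `θ_D^j(I)`: the number of paired `()`'s plus the number of `⋆`'s in `word_{j,I}(D)`. -/
def thetaCol {n : ℕ} (D : Finset (Fin n × Fin n)) (j : Fin n) (I : Finset (Fin n)) : ℕ :=
  matchedPairs (colWord D j I) + (colSet D j ∩ I).card

/-- `θ_D(I) = Σ_{j=1}^n θ_D^j(I)`. -/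
def theta {n : ℕ} (D : Finset (Fin n × Fin n)) (I : Finset (Fin n)) : ℕ :=
  ∑ j : Fin n, thetaCol D j I

/-- The Newton polytope of a multivariate polynomial: the convex hull of the exponent
vectors of the monomials appearing with nonzero coefficient. -/
def newtonPolytope {σ : Type*} (f : MvPolynomial σ ℤ) : Set (σ → ℝ) :=
  convexHull ℝ ((fun (d : σ →₀ ℕ) (i : σ) => ((d i : ℕ) : ℝ)) '' ↑f.support)

/-- The Rothe diagram `D(w) = {(i,j) : w(i) > j, w⁻¹(j) > i}` of a permutation `w ∈ S_n`. -/
def rothe {n : ℕ} (w : Equiv.Perm (Fin n)) : Finset (Fin n × Fin n) :=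
  Finset.univ.filter fun p => p.2 < w p.1 ∧ p.1 < w⁻¹ p.2


def swPhi {n : ℕ} (w : Equiv.Perm (Fin n)) : ℕ := ∑ k : Fin n, k.val * (w k).val

lemma swPhi_lt {n : ℕ} (w : Equiv.Perm (Fin n)) (i j : Fin n) (hij : i < j) (h : w i < w j) :
    swPhi (w * Equiv.swap i j) < swPhi w := by
  unfold swPhi
  have hj : j ∈ (univ : Finset (Fin n)).erase i := by simp [hij.ne']
  rw [← Finset.add_sum_erase _ _ (mem_univ i), ← Finset.add_sum_erase _ _ hj,
    ← Finset.add_sum_erase (f := fun k : Fin n => k.val * (w k).val) _ (mem_univ i),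
    ← Finset.add_sum_erase (f := fun k : Fin n => k.val * (w k).val) _ hj]
  have : ∑ x ∈ ((univ : Finset (Fin n)).erase i).erase j, x.val * ((w * Equiv.swap i j) x).val
      = ∑ x ∈ ((univ : Finset (Fin n)).erase i).erase j, x.val * (w x).val := by
    apply Finset.sum_congr rfl
    intro x hx
    simp only [mem_erase] at hx
    simp [Equiv.swap_apply_of_ne_of_ne hx.2.1 hx.1]
  rw [this]
  simp only [Equiv.Perm.mul_apply, Equiv.swap_apply_left, Equiv.swap_apply_right]
  rw [Fin.lt_def] at hij h
  obtain ⟨e, he⟩ := Nat.exists_eq_add_of_lt hij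
  obtain ⟨f, hf⟩ := Nat.exists_eq_add_of_lt h
  rw [he, hf]
  nlinarith

def covSet {n : ℕ} (w : Equiv.Perm (Fin n)) (i : Fin n) : Finset (Fin n) :=
  univ.filter fun j => i < j ∧ w i < w j ∧ ∀ l, i < l → l < j → w i < w l → ¬ (w l < w j)

lemma lt_rev_of {n : ℕ} (w : Equiv.Perm (Fin n)) (i : Fin n)
    (h1 : ∀ k < i, w k = Fin.rev k) (h2 : w i ≠ Fin.rev i) : w i < Fin.rev i := by
  by_contra hc
  have h3 : Fin.rev i < w i := lt_of_le_of_ne (not_lt.mp hc) (Ne.symm h2)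
  have h4 : Fin.rev (w i) < i := by
    rw [← Fin.rev_lt_rev]; simpa using h3
  have := h1 _ h4
  rw [Fin.rev_rev] at this
  exact h4.ne (w.injective this)

lemma perm_eq_rev {n : ℕ} (w : Equiv.Perm (Fin n))
    (h : ∀ i j : Fin n, (i : ℕ) + 1 = j → w j < w i) : w = Fin.revPerm := by
  by_contra hne
  have hex : ∃ i, w i ≠ Fin.rev i := by
    by_contra hc
    push Not at hc
    exact hne (Equiv.ext fun x => by simp [hc x])
  have hanti : ∀ (d : ℕ) (i j : Fin n), (i : ℕ) + d + 1 = j → w j < w i := by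
    intro d
    induction d with
    | zero => intro i j hij; exact h i j (by omega)
    | succ d ih =>
      intro i j hij
      have hlt : (i : ℕ) + d + 1 < n := by omega
      exact (h ⟨(i : ℕ) + d + 1, hlt⟩ j (by simp; omega)).trans (ih i _ rfl)
  obtain ⟨i, hi, hmin⟩ := WellFounded.has_min (wellFounded_lt (α := Fin n))
    {i | w i ≠ Fin.rev i} hex
  have h1 : ∀ k < i, w k = Fin.rev k := by
    intro k hk
    by_contra hc
    exact hmin k hc hk
  have h2 := lt_rev_of w i h1 hi
  -- position of rev i
  obtain ⟨p, hp⟩ := w.surjective (Fin.rev i)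
  rcases lt_trichotomy p i with h3 | h3 | h3
  · have := h1 p h3
    rw [this] at hp
    exact h3.ne (Fin.rev_injective hp)
  · subst h3; exact hi hp
  · have := hanti (p - i - 1) i p (by omega)
    rw [hp] at this
    exact absurd this (not_lt.mpr h2.le)

lemma exists_first {n : ℕ} (w : Equiv.Perm (Fin n)) (hne : w ≠ Fin.revPerm) :
    ∃ i, (∀ k < i, w k = Fin.rev k) ∧ w i ≠ Fin.rev i := by
  have hex : ∃ i, w i ≠ Fin.rev i := by
    by_contra hc
    push Not at hc
    exact hne (Equiv.ext fun x => by simp [hc x])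
  obtain ⟨i, hi, hmin⟩ := WellFounded.has_min (wellFounded_lt (α := Fin n))
    {i | w i ≠ Fin.rev i} hex
  refine ⟨i, fun k hk => ?_, hi⟩
  by_contra hc
  exact hmin k hc hk

section cotransition

variable {n : ℕ} (Schub : Equiv.Perm (Fin n) → MvPolynomial (Fin n) ℤ)

lemma X_sub_ne {i j : Fin n} (h : i ≠ j) : (X i - X j : MvPolynomial (Fin n) ℤ) ≠ 0 := by
  intro hc
  exact h (MvPolynomial.X_injective (sub_eq_zero.mp hc))

lemma schub_desc
    (hrec : ∀ (w : Equiv.Perm (Fin n)) (i j : Fin n), (i : ℕ) + 1 = (j : ℕ) → w i < w j →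
      (X i - X j) * Schub w =
        Schub (w * Equiv.swap i j) -
          rename (Equiv.swap i j) (Schub (w * Equiv.swap i j)))
    (u : Equiv.Perm (Fin n)) (i j : Fin n) (hij : (i : ℕ) + 1 = j) (h : u j < u i) :
    Schub u - rename (Equiv.swap i j) (Schub u) = (X i - X j) * Schub (u * Equiv.swap i j) := by
  have := hrec (u * Equiv.swap i j) i j hij (by simpa using h)
  rw [this, mul_assoc, Equiv.swap_mul_self, mul_one]

lemma schub_asc
    (hrec : ∀ (w : Equiv.Perm (Fin n)) (i j : Fin n), (i : ℕ) + 1 = (j : ℕ) → w i < w j →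
      (X i - X j) * Schub w =
        Schub (w * Equiv.swap i j) -
          rename (Equiv.swap i j) (Schub (w * Equiv.swap i j)))
    (u : Equiv.Perm (Fin n)) (i j : Fin n) (hij : (i : ℕ) + 1 = j) (h : u i < u j) :
    Schub u - rename (Equiv.swap i j) (Schub u) = 0 := by
  have h1 := hrec u i j hij h
  have h2 := congrArg (rename (Equiv.swap i j)) h1
  simp only [map_mul, map_sub, rename_X, Equiv.swap_apply_left, Equiv.swap_apply_right,
    rename_rename] at h2
  have h3 : (Equiv.swap i j : Fin n → Fin n) ∘ (Equiv.swap i j) = id := by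
    ext x; simp
  rw [h3, rename_id_apply] at h2
  have hne : i ≠ j := by intro hc; subst hc; omega
  have h4 : (X i - X j : MvPolynomial (Fin n) ℤ) *
      (Schub u - rename (Equiv.swap i j) (Schub u)) = 0 := by
    linear_combination h1 + h2
  exact (mul_eq_zero.mp h4).resolve_left (X_sub_ne hne)



lemma cotrans_base (i j : Fin n) (hij : (i : ℕ) + 1 = j) :
    (X j : MvPolynomial (Fin n) ℤ) * ∏ k : Fin n, X k ^ (n - 1 - (k : ℕ)) =
      X i * rename (Equiv.swap i j) (∏ k : Fin n, X k ^ (n - 1 - (k : ℕ))) := by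
  have hne : i ≠ j := by intro hc; subst hc; omega
  have hj : j ∈ (univ : Finset (Fin n)).erase i := by simp [hne.symm]
  simp only [map_prod, map_pow, rename_X]
  rw [← Finset.mul_prod_erase _ _ (mem_univ i), ← Finset.mul_prod_erase _ _ hj,
    ← Finset.mul_prod_erase (a := i) univ
      (fun k : Fin n => (X (Equiv.swap i j k) : MvPolynomial (Fin n) ℤ) ^ (n - 1 - (k : ℕ)))
      (mem_univ i),
    ← Finset.mul_prod_erase
      (f := fun k : Fin n => (X (Equiv.swap i j k) : MvPolynomial (Fin n) ℤ) ^ (n - 1 - (k : ℕ)))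
      _ hj]
  have : ∏ x ∈ ((univ : Finset (Fin n)).erase i).erase j,
        (X (Equiv.swap i j x) : MvPolynomial (Fin n) ℤ) ^ (n - 1 - (x : ℕ))
      = ∏ x ∈ ((univ : Finset (Fin n)).erase i).erase j, X x ^ (n - 1 - (x : ℕ)) := by
    apply Finset.prod_congr rfl
    intro x hx
    simp only [mem_erase] at hx
    rw [Equiv.swap_apply_of_ne_of_ne hx.2.1 hx.1]
  rw [this]
  simp only [Equiv.swap_apply_left, Equiv.swap_apply_right]
  have h1 : n - 1 - (i : ℕ) = (n - 1 - (j : ℕ)) + 1 := by omega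
  rw [h1]
  ring

lemma cotrans
    (hbase : Schub Fin.revPerm = ∏ i : Fin n, X i ^ (n - 1 - (i : ℕ)))
    (hrec : ∀ (w : Equiv.Perm (Fin n)) (i j : Fin n), (i : ℕ) + 1 = (j : ℕ) → w i < w j →
      (X i - X j) * Schub w =
        Schub (w * Equiv.swap i j) -
          rename (Equiv.swap i j) (Schub (w * Equiv.swap i j))) :
    ∀ (N : ℕ) (w : Equiv.Perm (Fin n)) (i : Fin n), swPhi w < N →
      (∀ k < i, w k = Fin.rev k) → w i ≠ Fin.rev i →
      X i * Schub w = ∑ j ∈ covSet w i, Schub (w * Equiv.swap i j) := by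
  intro N
  induction N with
  | zero => intro w i h; omega
  | succ N ih =>
  intro w i hN h1 h2
  have hlt := lt_rev_of w i h1 h2
  by_cases hA : ∃ k l : Fin n, (k : ℕ) + 1 = l ∧ i < k ∧ w k < w l
  · obtain ⟨k, l, hkl, hik, hw⟩ := hA
    have hkl' : k < l := by rw [Fin.lt_def]; omega
    have hil : i < l := hik.trans hkl'
    have hsi : Equiv.swap k l i = i := Equiv.swap_apply_of_ne_of_ne hik.ne hil.ne
    set v := w * Equiv.swap k l with hv
    have hvi : v i = w i := by simp [hv, hsi]
    have hvk : v k = w l := by simp [hv]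
    have hvl : v l = w k := by simp [hv]
    have hvo : ∀ x, x ≠ k → x ≠ l → v x = w x := by
      intro x hx hx'; simp [hv, Equiv.swap_apply_of_ne_of_ne hx hx']
    have hIH := ih v i (lt_of_lt_of_le (swPhi_lt w k l hkl' hw) (by omega))
      (by intro m hm
          rw [hvo m (hm.trans hik).ne (hm.trans hil).ne, h1 m hm])
      (by rw [hvi]; exact h2)
    have hR := hrec w k l hkl hw
    rw [← hv] at hR
    apply mul_left_cancel₀ (X_sub_ne (n := n) hkl'.ne)
    have hR2 : (X k - X l) * (X i * Schub w)
        = X i * Schub v - rename (Equiv.swap k l) (X i * Schub v) := by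
      rw [map_mul, rename_X, hsi]
      linear_combination X i * hR
    rw [hR2, hIH, map_sum, ← Finset.sum_sub_distrib, Finset.mul_sum]
    -- reindex
    unfold covSet
    rw [Finset.sum_filter, Finset.sum_filter, ← Equiv.sum_comp (Equiv.swap k l)]
    apply Finset.sum_congr rfl
    intro j _
    have hconj : v * Equiv.swap i (Equiv.swap k l j) * Equiv.swap k l = w * Equiv.swap i j := by
      have := Equiv.swap_apply_apply (Equiv.swap k l) i j
      rw [hsi] at this
      rw [this, hv]
      simp [mul_assoc]
    rcases eq_or_ne j k with hjk | hjk
    · subst hjk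
      rw [Equiv.swap_apply_left] at hconj ⊢
      have hiff : (i < l ∧ v i < v l ∧ ∀ x, i < x → x < l → v i < v x → ¬ (v x < v l)) ↔
          (i < j ∧ w i < w j ∧ ∀ x, i < x → x < j → w i < w x → ¬ (w x < w j)) := by
        rw [hvi, hvl]
        constructor
        · rintro ⟨_, b, c⟩
          refine ⟨hik, b, fun x hx hx' h3 h4 => ?_⟩
          have := c x hx (hx'.trans hkl')
          rw [hvo x hx'.ne (hx'.trans hkl').ne] at this
          exact this h3 h4
        · rintro ⟨_, b, c⟩
          refine ⟨hil, b, fun x hx hx' h3 h4 => ?_⟩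
          rcases eq_or_ne x j with rfl | hxj
          · rw [hvk] at h4; exact lt_asymm h4 hw
          · rw [hvo x hxj hx'.ne] at h3 h4
            have : x < j := by
              rw [Fin.lt_def] at hx' ⊢
              have : (x : ℕ) ≠ j := fun h => hxj (Fin.ext h)
              omega
            exact c x hx this h3 h4
      by_cases hc : (i < j ∧ w i < w j ∧ ∀ x, i < x → x < j → w i < w x → ¬ (w x < w j))
      · rw [if_pos (hiff.mpr hc), if_pos hc, ← hconj]
        apply schub_desc Schub hrec _ _ _ hkl
        have e1 : (v * Equiv.swap i l) l = w i := by simp [hvi]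
        have e2 : (v * Equiv.swap i l) j = w l := by
          rw [Equiv.Perm.mul_apply, Equiv.swap_apply_of_ne_of_ne hik.ne' hkl'.ne, hvk]
        rw [e1, e2]
        exact hc.2.1.trans hw
      · rw [if_neg (fun h => hc (hiff.mp h)), if_neg hc]
    rcases eq_or_ne j l with hjl | hjl
    · subst hjl
      rw [Equiv.swap_apply_right] at hconj ⊢
      by_cases ha : w k < w i
      · have hiff : (i < k ∧ v i < v k ∧ ∀ x, i < x → x < k → v i < v x → ¬ (v x < v k)) ↔
            (i < j ∧ w i < w j ∧ ∀ x, i < x → x < j → w i < w x → ¬ (w x < w j)) := by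
          rw [hvi, hvk]
          constructor
          · rintro ⟨_, b, c⟩
            refine ⟨hil, b, fun x hx hx' h3 h4 => ?_⟩
            rcases eq_or_ne x k with rfl | hxj
            · exact lt_asymm h3 ha
            · have hxk : x < k := by
                rw [Fin.lt_def] at hx' ⊢
                have : (x : ℕ) ≠ k := fun h => hxj (Fin.ext h)
                omega
              have := c x hx hxk
              rw [hvo x hxj hx'.ne] at this
              exact this h3 h4
          · rintro ⟨_, b, c⟩
            refine ⟨hik, b, fun x hx hx' h3 h4 => ?_⟩
            rw [hvo x hx'.ne (hx'.trans hkl').ne] at h3 h4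
            exact c x hx (hx'.trans hkl') h3 h4
        by_cases hc : (i < j ∧ w i < w j ∧ ∀ x, i < x → x < j → w i < w x → ¬ (w x < w j))
        · rw [if_pos (hiff.mpr hc), if_pos hc, ← hconj]
          apply schub_desc Schub hrec _ _ _ hkl
          have e1 : (v * Equiv.swap i k) k = w i := by simp [hvi]
          have e2 : (v * Equiv.swap i k) j = w k := by
            rw [Equiv.Perm.mul_apply, Equiv.swap_apply_of_ne_of_ne hil.ne' hkl'.ne', hvl]
          rw [e1, e2]
          exact ha
        · rw [if_neg (fun h => hc (hiff.mp h)), if_neg hc]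
      · have ha' : w i < w k := lt_of_le_of_ne (not_lt.mp ha)
          (fun h => hik.ne (w.injective h))
        rw [if_neg (c := (i < j ∧ w i < w j ∧ ∀ x, i < x → x < j → w i < w x → ¬ (w x < w j)))
          (fun h => h.2.2 k hik hkl' ha' hw)]
        split_ifs with hc
        · apply schub_asc Schub hrec _ _ _ hkl
          have e1 : (v * Equiv.swap i k) k = w i := by simp [hvi]
          have e2 : (v * Equiv.swap i k) j = w k := by
            rw [Equiv.Perm.mul_apply, Equiv.swap_apply_of_ne_of_ne hil.ne' hkl'.ne', hvl]
          rw [e1, e2]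
          exact ha'
        · rfl
    · rw [Equiv.swap_apply_of_ne_of_ne hjk hjl] at hconj ⊢
      have hjk' : (j : ℕ) ≠ k := fun h => hjk (Fin.ext h)
      have hjl' : (j : ℕ) ≠ l := fun h => hjl (Fin.ext h)
      have hslt : ∀ x, i < x → x < j → (i < Equiv.swap k l x ∧ Equiv.swap k l x < j) := by
        intro x hx hx'
        rcases eq_or_ne x k with rfl | hxk
        · rw [Equiv.swap_apply_left]
          refine ⟨hil, ?_⟩
          rw [Fin.lt_def] at hx' ⊢; omega
        rcases eq_or_ne x l with rfl | hxl
        · rw [Equiv.swap_apply_right]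
          exact ⟨hik, hkl'.trans hx'⟩
        rw [Equiv.swap_apply_of_ne_of_ne hxk hxl]
        exact ⟨hx, hx'⟩
      have hiff : (i < j ∧ v i < v j ∧ ∀ x, i < x → x < j → v i < v x → ¬ (v x < v j)) ↔
          (i < j ∧ w i < w j ∧ ∀ x, i < x → x < j → w i < w x → ¬ (w x < w j)) := by
        rw [hvi, hvo j hjk hjl]
        constructor
        · rintro ⟨a, b, c⟩
          refine ⟨a, b, fun x hx hx' h3 h4 => ?_⟩
          have := c _ (hslt x hx hx').1 (hslt x hx hx').2
          simp only [hv, Equiv.Perm.mul_apply, Equiv.swap_apply_self] at this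
          exact this h3 h4
        · rintro ⟨a, b, c⟩
          refine ⟨a, b, fun x hx hx' h3 h4 => ?_⟩
          exact c _ (hslt x hx hx').1 (hslt x hx hx').2 h3 h4
      by_cases hc : (i < j ∧ w i < w j ∧ ∀ x, i < x → x < j → w i < w x → ¬ (w x < w j))
      · rw [if_pos (hiff.mpr hc), if_pos hc, ← hconj]
        apply schub_desc Schub hrec _ _ _ hkl
        have e1 : (v * Equiv.swap i j) l = w k := by
          rw [Equiv.Perm.mul_apply, Equiv.swap_apply_of_ne_of_ne hil.ne' hjl.symm, hvl]
        have e2 : (v * Equiv.swap i j) k = w l := by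
          rw [Equiv.Perm.mul_apply, Equiv.swap_apply_of_ne_of_ne hik.ne' hjk.symm, hvk]
        rw [e1, e2]
        exact hw
      · rw [if_neg (fun h => hc (hiff.mp h)), if_neg hc]
  · push Not at hA
    -- the remaining values decrease after position i
    have hin : (i : ℕ) + 1 < n := by
      have := Fin.lt_def.mp hlt
      rw [Fin.val_rev] at this
      omega
    set l : Fin n := ⟨(i : ℕ) + 1, hin⟩ with hl
    have hil' : (i : ℕ) + 1 = l := rfl
    have hil : i < l := by rw [Fin.lt_def]; omega
    have hanti : ∀ (d : ℕ) (x y : Fin n), i < x → (x : ℕ) + d = y → w y ≤ w x := by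
      intro d
      induction d with
      | zero => intro x y _ h; have : x = y := Fin.ext (by omega)
                rw [this]
      | succ d ihd =>
        intro x y hx hxy
        have hb : (x : ℕ) + d < n := by omega
        refine (hA ⟨(x : ℕ) + d, hb⟩ y (by simp; omega) ?_).trans (ihd x _ hx rfl)
        rw [Fin.lt_def] at hx ⊢
        simp; omega
    have hwl : w l = Fin.rev i := by
      obtain ⟨p, hp⟩ := w.surjective (Fin.rev i)
      rcases lt_trichotomy p i with h3 | h3 | h3
      · have := h1 p h3
        rw [this] at hp
        exact absurd (Fin.rev_injective hp) h3.ne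
      · subst h3; exact absurd hp h2
      · have h4 := hanti (p - l) l p hil (by rw [Fin.lt_def] at h3; omega)
        rw [hp] at h4
        by_contra hc
        have h5 : Fin.rev i < w l := lt_of_le_of_ne h4 (Ne.symm hc)
        have h6 : Fin.rev (w l) < i := by
          rw [← Fin.rev_lt_rev]; simpa using h5
        have := h1 _ h6
        rw [Fin.rev_rev] at this
        exact (h6.trans hil).ne (w.injective this)
    have hw : w i < w l := by rw [hwl]; exact hlt
    set v := w * Equiv.swap i l with hv
    have hvi : v i = Fin.rev i := by simp [hv, hwl]
    have hvl : v l = w i := by simp [hv]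
    have hvo : ∀ x, x ≠ i → x ≠ l → v x = w x := by
      intro x hx hx'; simp [hv, Equiv.swap_apply_of_ne_of_ne hx hx']
    have hvstair : ∀ k < l, v k = Fin.rev k := by
      intro k hk
      rcases eq_or_ne k i with rfl | hki
      · exact hvi
      · rw [hvo k hki hk.ne]
        apply h1
        have : (k : ℕ) ≠ i := fun h => hki (Fin.ext h)
        rw [Fin.lt_def] at hk ⊢
        omega
    have hR := hrec w i l hil' hw
    rw [← hv] at hR
    apply mul_left_cancel₀ (X_sub_ne (n := n) hil.ne)
    by_cases hB : w i = Fin.rev l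
    · have hv0 : v = Fin.revPerm := by
        apply perm_eq_rev
        intro x y hxy
        by_cases hx : l < x
        · have hy : l < y := by rw [Fin.lt_def] at hx ⊢; omega
          rw [hvo x (hil.trans hx).ne' hx.ne', hvo y (hil.trans hy).ne' hy.ne']
          refine lt_of_le_of_ne (hA x y hxy (hil.trans hx)) ?_
          intro h
          have := congrArg Fin.val (w.injective h)
          omega
        · have hx' : x ≤ l := not_lt.mp hx
          have hvst : ∀ k ≤ l, v k = Fin.rev k := by
            intro k hk
            rcases hk.lt_or_eq with h | h
            · exact hvstair k h
            · rw [h, hvl, hB]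
          rw [hvst x hx']
          by_cases hy : y ≤ l
          · rw [hvst y hy, Fin.rev_lt_rev, Fin.lt_def]; omega
          · by_contra hc
            have hc' : Fin.rev x ≤ v y := not_lt.mp hc
            have h6 : Fin.rev (v y) ≤ x := by
              rw [← Fin.rev_le_rev]; simpa using hc'
            have := hvst _ (h6.trans hx')
            rw [Fin.rev_rev] at this
            have h7 := v.injective this
            rw [h7] at h6
            rw [Fin.le_def] at h6
            omega
      have hcov : covSet w i = {l} := by
        ext j
        simp only [covSet, mem_filter, mem_univ, true_and, mem_singleton]
        constructor
        · rintro ⟨a, b, c⟩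
          by_contra hjl
          have hlj : l < j := by
            have : (j : ℕ) ≠ l := fun h => hjl (Fin.ext h)
            rw [Fin.lt_def] at a ⊢; omega
          have : v j = w j := hvo j a.ne' hjl
          rw [← this, hv0, hB, Fin.revPerm_apply, Fin.rev_lt_rev] at b
          exact lt_asymm b hlj
        · rintro rfl
          refine ⟨hil, hw, fun x hx hx' => ?_⟩
          rw [Fin.lt_def] at hx hx'
          omega
      rw [hcov, Finset.sum_singleton, ← hv]
      have hb := cotrans_base i l hil'
      rw [← hbase, ← hv0] at hb
      linear_combination X i * hR + hb
    · have hIH := ih v l (lt_of_lt_of_le (swPhi_lt w i l hil hw) (by omega)) hvstair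
        (by rw [hvl]; exact hB)
      have hcov : covSet w i = insert l (covSet v l) := by
        ext j
        simp only [covSet, mem_filter, mem_univ, true_and, mem_insert]
        constructor
        · rintro ⟨a, b, c⟩
          by_cases hjl : j = l
          · left; exact hjl
          · right
            have hlj : l < j := by
              have : (j : ℕ) ≠ l := fun h => hjl (Fin.ext h)
              rw [Fin.lt_def] at a ⊢; omega
            rw [hvl, hvo j a.ne' hjl]
            refine ⟨hlj, b, fun x hx hx' => ?_⟩
            rw [hvo x (hil.trans hx).ne' hx.ne']
            exact c x (hil.trans hx) hx'
        · rintro (rfl | ⟨a, b, c⟩)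
          · refine ⟨hil, hw, fun x hx hx' => ?_⟩
            rw [Fin.lt_def] at hx hx'
            omega
          · rw [hvl, hvo j (hil.trans a).ne' a.ne'] at b
            refine ⟨hil.trans a, b, fun x hx hx' h3 h4 => ?_⟩
            rcases eq_or_ne x l with rfl | hxl
            · rw [hwl] at h4
              have h6 : Fin.rev (w j) < i := by
                rw [← Fin.rev_lt_rev]; simpa using h4
              have := h1 _ h6
              rw [Fin.rev_rev] at this
              exact (h6.trans (hil.trans a)).ne (w.injective this)
            · have hlx : l < x := by
                have : (x : ℕ) ≠ l := fun h => hxl (Fin.ext h)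
                rw [Fin.lt_def] at hx ⊢; omega
              have := c x hlx hx'
              rw [hvl, hvo x hx.ne' hxl, hvo j (hil.trans a).ne' a.ne'] at this
              exact this h3 h4
      have hnot : l ∉ covSet v l := by simp [covSet]
      rw [hcov, Finset.sum_insert hnot, ← hv]
      have hsum : (X i - X l) * ∑ j ∈ covSet v l, Schub (w * Equiv.swap i j)
          = X l * Schub v - rename (Equiv.swap i l) (X l * Schub v) := by
        rw [hIH, map_sum, ← Finset.sum_sub_distrib, Finset.mul_sum]
        apply Finset.sum_congr rfl
        intro j hj
        have hj' := hj
        simp only [covSet, mem_filter, mem_univ, true_and] at hj'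
        obtain ⟨a, b, c⟩ := hj'
        have hconj : v * Equiv.swap l j * Equiv.swap i l = w * Equiv.swap i j := by
          have := Equiv.swap_apply_apply (Equiv.swap i l) i j
          rw [Equiv.swap_apply_left, Equiv.swap_apply_of_ne_of_ne (hil.trans a).ne' a.ne'] at this
          rw [this, hv]
          simp [mul_assoc]
        rw [← hconj]
        symm
        apply schub_desc Schub hrec _ _ _ hil'
        have e1 : (v * Equiv.swap l j) l = w j := by
          simp [hvo j (hil.trans a).ne' a.ne']
        have e2 : (v * Equiv.swap l j) i = Fin.rev i := by
          rw [Equiv.Perm.mul_apply, Equiv.swap_apply_of_ne_of_ne hil.ne (hil.trans a).ne, hvi]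
        rw [e1, e2]
        by_contra hc
        have hc' : Fin.rev i ≤ w j := not_lt.mp hc
        rcases hc'.lt_or_eq with h4 | h4
        · have h6 : Fin.rev (w j) < i := by
            rw [← Fin.rev_lt_rev]; simpa using h4
          have := h1 _ h6
          rw [Fin.rev_rev] at this
          exact (h6.trans (hil.trans a)).ne (w.injective this)
        · rw [← hwl] at h4
          exact a.ne (w.injective h4)
      rw [map_mul, rename_X, Equiv.swap_apply_right] at hsum
      rw [mul_add, hsum]
      linear_combination X i * hR

end cotransition

section greedy

variable {n : ℕ}

/-- Elements of `Fin n` with value at most `t` which are not in `A`. -/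
def avail (A : Finset (Fin n)) (t : ℕ) : Finset (Fin n) :=
  univ.filter fun x => (x : ℕ) ≤ t ∧ x ∉ A

/-- The greedy (maximal weight) basis. -/
noncomputable def greedy (r : Equiv.Perm (Fin n)) (S : Finset (Fin n)) : ℕ → Finset (Fin n)
  | 0 => ∅
  | t + 1 =>
    open Classical in
    if h : (∃ s ∈ S, (s : ℕ) = t) ∧ (avail (greedy r S t) t).Nonempty then
      insert (Classical.choose (Finset.exists_max_image _ r h.2)) (greedy r S t)
    else greedy r S t

/-- number of elements below `t` -/
def cnt (S : Finset (Fin n)) (t : ℕ) : ℕ := (S.filter fun x : Fin n => (x : ℕ) < t).card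

lemma cnt_succ_of_notMem (S : Finset (Fin n)) (t : ℕ) (h : ¬ ∃ s ∈ S, (s : ℕ) = t) :
    cnt S (t + 1) = cnt S t := by
  unfold cnt
  congr 1
  ext x
  simp only [mem_filter]
  constructor
  · rintro ⟨a, b⟩
    refine ⟨a, ?_⟩
    have : (x : ℕ) ≠ t := fun h' => h ⟨x, a, h'⟩
    omega
  · rintro ⟨a, b⟩; exact ⟨a, by omega⟩

lemma cnt_succ_of_mem (S : Finset (Fin n)) (s : Fin n) (h : s ∈ S) :
    cnt S ((s : ℕ) + 1) = cnt S s + 1 := by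
  unfold cnt
  have : (S.filter fun x : Fin n => (x : ℕ) < (s : ℕ) + 1) = insert s (S.filter fun x : Fin n => (x : ℕ) < s) := by
    ext x
    simp only [mem_filter, mem_insert]
    constructor
    · rintro ⟨a, b⟩
      by_cases hx : x = s
      · left; exact hx
      · right; refine ⟨a, ?_⟩
        have : (x : ℕ) ≠ s := fun h' => hx (Fin.ext h')
        omega
    · rintro (rfl | ⟨a, b⟩)
      · exact ⟨h, by omega⟩
      · exact ⟨a, by omega⟩
  rw [this, card_insert_of_notMem]
  simp

lemma cnt_n (S : Finset (Fin n)) : cnt S n = S.card := by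
  unfold cnt
  congr 1
  ext x; simp

lemma greedy_basic (r : Equiv.Perm (Fin n)) (S : Finset (Fin n)) (t : ℕ) :
    (∀ x ∈ greedy r S t, (x : ℕ) < t) ∧ (greedy r S t).card = cnt S t := by
  induction t with
  | zero => simp [greedy, cnt]
  | succ t ih =>
    by_cases h : ∃ s ∈ S, (s : ℕ) = t
    · have hne : (avail (greedy r S t) t).Nonempty := by
        obtain ⟨s, hs, rfl⟩ := h
        refine ⟨s, ?_⟩
        simp only [avail, mem_filter, mem_univ, true_and, le_refl]
        intro hc
        exact absurd (ih.1 s hc) (lt_irrefl _)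
      have hp : (∃ s ∈ S, (s : ℕ) = t) ∧ (avail (greedy r S t) t).Nonempty := ⟨h, hne⟩
      have hch := Classical.choose_spec (Finset.exists_max_image _ r hp.2)
      rw [greedy, dif_pos hp]
      set p := Classical.choose (Finset.exists_max_image _ r hp.2)
      have hpa := hch.1
      simp only [avail, mem_filter, mem_univ, true_and] at hpa
      constructor
      · intro x hx
        rw [mem_insert] at hx
        rcases hx with rfl | hx
        · omega
        · have := ih.1 x hx; omega
      · rw [card_insert_of_notMem hpa.2, ih.2]
        obtain ⟨s, hs, rfl⟩ := h
        rw [cnt_succ_of_mem S s hs]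
    · rw [greedy, dif_neg (fun hc => h hc.1), cnt_succ_of_notMem S t h]
      exact ⟨fun x hx => (ih.1 x hx).trans (Nat.lt_succ_self t), ih.2⟩

lemma greedy_skip (r : Equiv.Perm (Fin n)) (S : Finset (Fin n)) (t : ℕ)
    (h : ¬ ∃ s ∈ S, (s : ℕ) = t) : greedy r S (t + 1) = greedy r S t := by
  rw [greedy, dif_neg (fun hc => h hc.1)]

lemma greedy_step (r : Equiv.Perm (Fin n)) (S : Finset (Fin n)) (s : Fin n) (h : s ∈ S) :
    ∃ p : Fin n, p ≤ s ∧ p ∉ greedy r S s ∧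
      (∀ y : Fin n, y ≤ s → y ∉ greedy r S s → r y ≤ r p) ∧
      greedy r S ((s : ℕ) + 1) = insert p (greedy r S s) := by
  have hne : (avail (greedy r S s) s).Nonempty := by
    refine ⟨s, ?_⟩
    simp only [avail, mem_filter, mem_univ, true_and, le_refl]
    intro hc
    exact absurd ((greedy_basic r S s).1 s hc) (lt_irrefl _)
  have hp : (∃ s' ∈ S, (s' : ℕ) = s) ∧ (avail (greedy r S s) s).Nonempty := ⟨⟨s, h, rfl⟩, hne⟩
  have hch := Classical.choose_spec (Finset.exists_max_image _ r hp.2)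
  rw [greedy, dif_pos hp]
  generalize Classical.choose (Finset.exists_max_image _ r hp.2) = p at hch
  refine ⟨p, ?_, ?_, ?_, rfl⟩
  · have := hch.1
    simp only [avail, mem_filter, mem_univ, true_and] at this
    exact this.1
  · have := hch.1
    simp only [avail, mem_filter, mem_univ, true_and] at this
    exact this.2
  · intro y hy hy'
    apply hch.2
    simp only [avail, mem_filter, mem_univ, true_and]
    exact ⟨hy, hy'⟩

lemma greedy_mono_succ (r : Equiv.Perm (Fin n)) (S : Finset (Fin n)) (t : ℕ) :
    greedy r S t ⊆ greedy r S (t + 1) := by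
  by_cases h : ∃ s ∈ S, (s : ℕ) = t
  · obtain ⟨s, hs, rfl⟩ := h
    obtain ⟨p, -, -, -, he⟩ := greedy_step r S s hs
    rw [he]
    exact subset_insert _ _
  · rw [greedy_skip r S t h]

lemma greedy_mono (r : Equiv.Perm (Fin n)) (S : Finset (Fin n)) {t t' : ℕ} (h : t ≤ t') :
    greedy r S t ⊆ greedy r S t' :=
  monotone_nat_of_le_succ (f := greedy r S) (fun t => greedy_mono_succ r S t) h

/-- The greedy basis depends only on the initial part. -/
lemma greedy_congr (r : Equiv.Perm (Fin n)) (S S' : Finset (Fin n)) (t : ℕ)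
    (h : ∀ x : Fin n, (x : ℕ) < t → (x ∈ S ↔ x ∈ S')) : greedy r S t = greedy r S' t := by
  induction t with
  | zero => rfl
  | succ t ih =>
    have ih' := ih (fun x hx => h x (by omega))
    by_cases hs : ∃ s ∈ S, (s : ℕ) = t
    · have hs' : ∃ s ∈ S', (s : ℕ) = t := by
        obtain ⟨s, a, b⟩ := hs
        exact ⟨s, (h s (by omega)).mp a, b⟩
      simp only [greedy, ih', hs, hs']
    · have hs' : ¬ ∃ s ∈ S', (s : ℕ) = t := by
        rintro ⟨s, a, b⟩
        exact hs ⟨s, (h s (by omega)).mpr a, b⟩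
      rw [greedy_skip r S t hs, greedy_skip r S' t hs', ih']

lemma greedy_init (r : Equiv.Perm (Fin n)) (S : Finset (Fin n)) (t : ℕ)
    (h : ∀ x : Fin n, (x : ℕ) < t → x ∈ S) :
    greedy r S t = univ.filter fun x : Fin n => (x : ℕ) < t := by
  apply eq_of_subset_of_card_le
  · intro x hx
    simp [(greedy_basic r S t).1 x hx]
  · rw [(greedy_basic r S t).2]
    unfold cnt
    apply card_le_card
    intro x hx
    simp only [mem_filter, mem_univ, true_and] at hx ⊢
    exact ⟨h x hx, hx⟩

/-- If the greedy procedure for `S` has not chosen `i` before `t`, then adding `i` to `S`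
adds `i` to the greedy basis. -/
lemma greedy_insert (r : Equiv.Perm (Fin n)) (S S' : Finset (Fin n)) (i : Fin n)
    (hinit : ∀ x : Fin n, x < i → x ∈ S) (hi : i ∉ S) (t : ℕ) (ht : (i : ℕ) < t)
    (hS' : ∀ x : Fin n, (x : ℕ) < t → (x ∈ S' ↔ x = i ∨ x ∈ S))
    (hnot : i ∉ greedy r S t) : greedy r S' t = insert i (greedy r S t) := by
  induction t with
  | zero => omega
  | succ t ih =>
    rcases Nat.lt_succ_iff_lt_or_eq.mp ht with h | h
    · have hnot' : i ∉ greedy r S t := fun hc => hnot (greedy_mono_succ r S t hc)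
      have ih' := ih h (fun x hx => hS' x (by omega)) hnot'
      by_cases hs : ∃ s ∈ S, (s : ℕ) = t
      · obtain ⟨s, hs, rfl⟩ := hs
        have hs' : s ∈ S' := (hS' s (by omega)).mpr (Or.inr hs)
        obtain ⟨p, p1, p2, p3, p4⟩ := greedy_step r S s hs
        obtain ⟨q, q1, q2, q3, q4⟩ := greedy_step r S' s hs'
        rw [ih'] at q2 q3
        rw [mem_insert, not_or] at q2
        have hpi : p ≠ i := by
          rintro rfl
          apply hnot
          rw [p4]; simp
        have hpq : p = q := by
          apply r.injective
          apply le_antisymm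
          · exact q3 p p1 (by simp [hpi, p2])
          · exact p3 q q1 q2.2
        rw [q4, p4, ih', hpq, Finset.insert_comm]
      · have hs' : ¬ ∃ s ∈ S', (s : ℕ) = t := by
          rintro ⟨s, a, b⟩
          rcases (hS' s (by omega)).mp a with rfl | h3
          · omega
          · exact hs ⟨s, h3, b⟩
        rw [greedy_skip r S t hs, greedy_skip r S' t hs', ih']
    · subst h
      have hs : ¬ ∃ s ∈ S, (s : ℕ) = i := by
        rintro ⟨s, a, b⟩
        rw [Fin.ext b] at a
        exact hi a
      rw [greedy_skip r S _ hs, greedy_init r S i (fun x hx => hinit x hx),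
        greedy_init r S' (i + 1)]
      · ext x
        simp only [mem_filter, mem_univ, true_and, mem_insert]
        rw [Fin.ext_iff]
        omega
      · intro x hx
        rw [hS' x hx]
        rcases Nat.lt_succ_iff_lt_or_eq.mp hx with h | h
        · exact Or.inr (hinit x h)
        · exact Or.inl (Fin.ext h)

lemma greedy_exchange (r : Equiv.Perm (Fin n)) (S : Finset (Fin n)) (i j : Fin n)
    (hinit : ∀ x : Fin n, x < i → x ∈ S) (hi : i ∉ S) (hij : i < j) (hj : j ∈ S)
    (hnot : i ∉ greedy r S j) (t : ℕ) (ht : (j : ℕ) < t) :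
    greedy r (insert i (S.erase j)) t = greedy r S t ∨
    ∃ (A : Finset (Fin n)) (p : Fin n), p ∉ A ∧ i ∉ A ∧ r i < r p ∧ (p : ℕ) < t ∧
      greedy r (insert i (S.erase j)) t = insert i A ∧ greedy r S t = insert p A := by
  set S' := insert i (S.erase j) with hS'
  induction t with
  | zero => omega
  | succ t ih =>
    rcases Nat.lt_succ_iff_lt_or_eq.mp ht with h | h
    · have ih' := ih h
      by_cases hs : ∃ s ∈ S, (s : ℕ) = t
      · obtain ⟨s, hs, rfl⟩ := hs
        have hsj : s ≠ j := by rintro rfl; omega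
        have hs' : s ∈ S' := by simp [hS', hsj, hs]
        obtain ⟨p, p1, p2, p3, p4⟩ := greedy_step r S s hs
        obtain ⟨q, q1, q2, q3, q4⟩ := greedy_step r S' s hs'
        rcases ih' with he | ⟨A, z, z1, z2, z3, z4, z5, z6⟩
        · left
          rw [he] at q2 q3
          have hpq : p = q := by
            apply r.injective
            exact le_antisymm (q3 p p1 p2) (p3 q q1 q2)
          rw [q4, p4, he, hpq]
        · rw [z5] at q2 q3 q4
          rw [z6] at p2 p3 p4
          have hzi : z ≠ i := by rintro rfl; exact lt_irrefl _ z3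
          have hzs : z ≤ s := le_of_lt z4
          have his : i ≤ s := (hij.trans h).le
          simp only [mem_insert, not_or] at p2 p3 q2 q3
          by_cases hpi : p = i
          · subst hpi
            left
            have : q = z := by
              by_contra hqz
              have h1 := q3 z hzs ⟨hzi, z1⟩
              have h2 := p3 q q1 ⟨hqz, q2.2⟩
              exact absurd (z3.trans_le (h1.trans h2)) (lt_irrefl _)
            rw [q4, p4, this, Finset.insert_comm]
          · have hip : r i < r p :=
              lt_of_le_of_ne (p3 i his ⟨hzi.symm, z2⟩) (fun h => hpi (r.injective h).symm)
            right
            by_cases hqz : q = z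
            · refine ⟨insert z A, p, ?_, ?_, hip, ?_, ?_, ?_⟩
              · simp [p2.1, p2.2]
              · simp [hzi.symm, z2]
              · exact Nat.lt_succ_of_le p1
              · rw [q4, hqz, Finset.insert_comm]
              · rw [p4]
            · have hpq : p = q := by
                apply r.injective
                exact le_antisymm (q3 p p1 ⟨hpi, p2.2⟩) (p3 q q1 ⟨hqz, q2.2⟩)
              refine ⟨insert p A, z, ?_, ?_, z3, by omega, ?_, ?_⟩
              · simp [Ne.symm p2.1, z1]
              · simp [Ne.symm hpi, z2]
              · rw [q4, ← hpq, Finset.insert_comm]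
              · rw [p4, Finset.insert_comm]
      · have hs' : ¬ ∃ s ∈ S', (s : ℕ) = t := by
          rintro ⟨s, a, b⟩
          simp only [hS', mem_insert, mem_erase] at a
          rcases a with rfl | ⟨_, a⟩
          · have := Fin.lt_def.mp hij
            omega
          · exact hs ⟨s, a, b⟩
        rw [greedy_skip r S t hs, greedy_skip r S' t hs']
        rcases ih' with he | ⟨A, z, z1, z2, z3, z4, z5, z6⟩
        · exact Or.inl he
        · exact Or.inr ⟨A, z, z1, z2, z3, by omega, z5, z6⟩
    · subst h
      have hs' : ¬ ∃ s ∈ S', (s : ℕ) = j := by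
        rintro ⟨s, a, b⟩
        rw [Fin.ext b] at a
        simp [hS', hij.ne'] at a
      have hins : greedy r S' j = insert i (greedy r S j) := by
        apply greedy_insert r S S' i hinit hi j hij _ hnot
        intro x hx
        have : x ≠ j := by rintro rfl; omega
        simp [hS', this]
      rw [greedy_skip r S' _ hs', hins]
      obtain ⟨p, p1, p2, p3, p4⟩ := greedy_step r S j hj
      rw [p4]
      by_cases hpi : p = i
      · left; rw [hpi]
      · right
        refine ⟨_, p, p2, hnot, ?_, Nat.lt_succ_of_le p1, rfl, rfl⟩
        exact lt_of_le_of_ne (p3 i hij.le hnot) (fun h => hpi (r.injective h).symm)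

lemma greedy_exchange' (r : Equiv.Perm (Fin n)) (S : Finset (Fin n)) (i j : Fin n)
    (hinit : ∀ x : Fin n, x < i → x ∈ S) (hi : i ∉ S) (hij : i < j) (hj : j ∈ S)
    (hnot : i ∉ greedy r S j) (hin : i ∈ greedy r S n) :
    greedy r (insert i (S.erase j)) n = greedy r S n := by
  rcases greedy_exchange r S i j hinit hi hij hj hnot n j.isLt with h | ⟨A, p, h1, h2, h3, _, _, h6⟩
  · exact h
  · rw [h6, mem_insert] at hin
    rcases hin with rfl | hin
    · exact absurd h3 (lt_irrefl _)
    · exact absurd hin h2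

/-- Counting form of dominance. -/
def CLE (R S : Finset (Fin n)) : Prop := R.card = S.card ∧ ∀ t, cnt S t ≤ cnt R t

lemma cnt_mono_set {A B : Finset (Fin n)} (h : A ⊆ B) (t : ℕ) : cnt A t ≤ cnt B t :=
  card_le_card (filter_subset_filter _ h)

lemma cnt_insert (S : Finset (Fin n)) (x : Fin n) (hx : x ∉ S) (t : ℕ) :
    cnt (insert x S) t = cnt S t + if (x : ℕ) < t then 1 else 0 := by
  unfold cnt
  rw [filter_insert]
  split_ifs with h
  · rw [card_insert_of_notMem]
    simp [hx]
  · rfl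

lemma cnt_erase (S : Finset (Fin n)) (x : Fin n) (hx : x ∈ S) (t : ℕ) :
    cnt (S.erase x) t + (if (x : ℕ) < t then 1 else 0) = cnt S t := by
  rw [← cnt_insert _ _ (notMem_erase x S), insert_erase hx]

lemma greedy_opt (r : Equiv.Perm (Fin n)) (f : Fin n → ℝ)
    (hf : ∀ x y, r x ≤ r y → f x ≤ f y) (S B : Finset (Fin n)) (hB : CLE B S) (t : ℕ) :
    ∃ B', CLE B' S ∧ greedy r S t ⊆ B' ∧ ∑ x ∈ B, f x ≤ ∑ x ∈ B', f x := by
  induction t with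
  | zero => exact ⟨B, hB, by simp [greedy], le_rfl⟩
  | succ t ih =>
    obtain ⟨B', b1, b2, b3⟩ := ih
    by_cases hs : ∃ s ∈ S, (s : ℕ) = t
    · obtain ⟨s, hs, rfl⟩ := hs
      obtain ⟨p, p1, p2, p3, p4⟩ := greedy_step r S s hs
      by_cases hp : p ∈ B'
      · refine ⟨B', b1, ?_, b3⟩
        rw [p4]
        exact insert_subset hp b2
      · have hcard : (greedy r S s).card < (B'.filter fun x : Fin n => (x : ℕ) < (s : ℕ) + 1).card := by
          rw [(greedy_basic r S s).2]
          have h1 := b1.2 ((s : ℕ) + 1)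
          rw [cnt_succ_of_mem S s hs] at h1
          unfold cnt at h1 ⊢
          omega
        obtain ⟨y, hy, hy'⟩ := Finset.exists_mem_notMem_of_card_lt_card hcard
        rw [mem_filter] at hy
        have hys : y ≤ s := Nat.lt_succ_iff.mp hy.2
        have hpe : p ∉ B'.erase y := fun h => hp (mem_of_mem_erase h)
        refine ⟨insert p (B'.erase y), ⟨?_, ?_⟩, ?_, ?_⟩
        · rw [card_insert_of_notMem hpe, card_erase_of_mem hy.1, ← b1.1]
          have := card_pos.mpr ⟨y, hy.1⟩
          omega
        · intro t'
          by_cases ht : t' ≤ s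
          · have h1 : greedy r S t' ⊆ insert p (B'.erase y) := by
              intro x hx
              have hx2 := greedy_mono r S ht hx
              have : x ≠ y := by rintro rfl; exact hy' hx2
              simp [this, b2 hx2]
            calc cnt S t' = (greedy r S t').card := (greedy_basic r S t').2.symm
              _ = cnt (greedy r S t') t' := by
                unfold cnt
                congr 1
                ext x
                simp only [mem_filter]
                exact ⟨fun h => ⟨h, (greedy_basic r S t').1 x h⟩, fun h => h.1⟩
              _ ≤ _ := cnt_mono_set h1 t'
          · have h1 := b1.2 t'
            rw [cnt_insert _ _ hpe]
            rw [← cnt_erase B' y hy.1 t'] at h1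
            have e1 : (y : ℕ) < t' := by have := Fin.le_def.mp hys; omega
            have e2 : (p : ℕ) < t' := by have := Fin.le_def.mp p1; omega
            simp only [e1, e2, if_true] at h1 ⊢
            exact h1
        · rw [p4]
          apply insert_subset (mem_insert_self _ _)
          intro x hx
          have : x ≠ y := by rintro rfl; exact hy' hx
          simp [this, b2 hx]
        · refine b3.trans ?_
          rw [sum_insert hpe, ← add_sum_erase _ _ hy.1]
          gcongr
          exact hf _ _ (p3 y hys hy')
    · rw [greedy_skip r S t hs]
      exact ⟨B', b1, b2, b3⟩

lemma greedy_opt' (r : Equiv.Perm (Fin n)) (f : Fin n → ℝ)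
    (hf : ∀ x y, r x ≤ r y → f x ≤ f y) (S B : Finset (Fin n)) (hB : CLE B S) :
    ∑ x ∈ B, f x ≤ ∑ x ∈ greedy r S n, f x := by
  obtain ⟨B', b1, b2, b3⟩ := greedy_opt r f hf S B hB n
  have : greedy r S n = B' := by
    apply eq_of_subset_of_card_le b2
    rw [b1.1, (greedy_basic r S n).2, cnt_n]
  rw [this]
  exact b3

lemma cle_refl (S : Finset (Fin n)) : CLE S S := ⟨rfl, fun _ => le_rfl⟩

lemma cle_exchange (B S : Finset (Fin n)) (i j : Fin n) (hi : i ∉ S) (hij : i < j) (hj : j ∈ S)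
    (h : CLE B (insert i (S.erase j))) : CLE B S := by
  have hi' : i ∉ S.erase j := fun h => hi (mem_of_mem_erase h)
  refine ⟨?_, fun t => ?_⟩
  · rw [h.1, card_insert_of_notMem hi', card_erase_of_mem hj]
    have := card_pos.mpr ⟨j, hj⟩
    omega
  · refine le_trans ?_ (h.2 t)
    rw [cnt_insert _ _ hi', ← cnt_erase S j hj t]
    have := Fin.lt_def.mp hij
    split_ifs <;> omega

lemma cle_insert (B S : Finset (Fin n)) (i : Fin n) (hi : i ∉ S) (hinit : ∀ x < i, x ∈ S)
    (h : CLE B (insert i S)) : i ∈ B ∧ CLE (B.erase i) S := by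
  have hall : (B.filter fun x : Fin n => (x : ℕ) < (i : ℕ) + 1)
      = univ.filter fun x : Fin n => (x : ℕ) < (i : ℕ) + 1 := by
    apply eq_of_subset_of_card_le
    · exact filter_subset_filter _ (subset_univ _)
    · refine le_trans ?_ (h.2 ((i : ℕ) + 1))
      unfold cnt
      apply card_le_card
      intro x hx
      simp only [mem_filter, mem_univ, true_and, mem_insert] at hx ⊢
      refine ⟨?_, hx⟩
      rcases Nat.lt_succ_iff_lt_or_eq.mp hx with h | h
      · exact Or.inr (hinit x h)
      · exact Or.inl (Fin.ext h)
  have hmem : ∀ x : Fin n, (x : ℕ) < i + 1 → x ∈ B := by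
    intro x hx
    have : x ∈ (B.filter fun x : Fin n => (x : ℕ) < (i : ℕ) + 1) := by
      rw [hall]; simp only [mem_filter, mem_univ, true_and]; exact hx
    exact (mem_filter.mp this).1
  have hiB : i ∈ B := hmem i (by omega)
  refine ⟨hiB, ?_, fun t => ?_⟩
  · rw [card_erase_of_mem hiB, h.1, card_insert_of_notMem hi]; simp
  · have h1 := h.2 t
    rw [cnt_insert _ _ hi, ← cnt_erase B i hiB] at h1
    omega

end greedy

section columns

variable {n : ℕ}

lemma mem_col (w : Equiv.Perm (Fin n)) (k m : Fin n) :
    k ∈ colSet (rothe w) (w m) ↔ w m < w k ∧ k < m := by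
  simp [colSet, rothe]

lemma stair_gt (w : Equiv.Perm (Fin n)) (i : Fin n) (h1 : ∀ k < i, w k = Fin.rev k)
    (k x : Fin n) (hk : k < i) (hkx : k < x) : w x < w k := by
  by_contra hc
  have hc' : Fin.rev k ≤ w x := by rw [← h1 k hk]; exact not_lt.mp hc
  have h6 : Fin.rev (w x) ≤ k := by
    rw [← Fin.rev_le_rev]; simpa using hc'
  have := h1 _ (h6.trans_lt hk)
  rw [Fin.rev_rev] at this
  have h7 := w.injective this
  rw [h7] at h6
  exact absurd hkx (not_lt.mpr h6)

lemma col_swap (w : Equiv.Perm (Fin n)) (i j : Fin n) (h1 : ∀ k < i, w k = Fin.rev k)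
    (hj : j ∈ covSet w i) (m : Fin n) :
    colSet (rothe (w * Equiv.swap i j)) (Equiv.swap (w i) (w j) (w m)) =
      if m = j then insert i (colSet (rothe w) (w m))
      else if w i < w m ∧ w m < w j then insert i ((colSet (rothe w) (w m)).erase j)
      else colSet (rothe w) (w m) := by
  simp only [covSet, mem_filter, mem_univ, true_and] at hj
  obtain ⟨hij, hw, hcov⟩ := hj
  have hc : Equiv.swap (w i) (w j) (w m) = (w * Equiv.swap i j) m := by
    rw [Equiv.swap_apply_apply]; simp
  have hF := stair_gt w i h1
  rw [hc]
  ext k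
  rw [mem_col]
  simp only [Equiv.Perm.mul_apply]
  by_cases hmj : m = j
  · subst hmj
    rw [if_pos rfl, mem_insert, mem_col, Equiv.swap_apply_right]
    rcases lt_trichotomy k i with h | h | h
    · rw [Equiv.swap_apply_of_ne_of_ne h.ne (h.trans hij).ne]
      simp [h.ne, hF k i h h, hF k m h (h.trans hij)]
    · subst h; simp [hw, hij]
    · by_cases hkm : k < m
      · rw [Equiv.swap_apply_of_ne_of_ne h.ne' hkm.ne]
        simp only [h.ne', hkm, false_or, and_true]
        constructor
        · intro h3
          exact lt_of_le_of_ne (not_lt.mp (hcov k h hkm h3)) (fun h => hkm.ne (w.injective h).symm)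
        · intro h3; exact hw.trans h3
      · simp [hkm, h.ne']
  · rw [if_neg hmj]
    by_cases hmi : m = i
    · subst hmi
      rw [if_neg (fun h => lt_irrefl _ h.1), mem_col, Equiv.swap_apply_left]
      by_cases hkm : k < m
      · rw [Equiv.swap_apply_of_ne_of_ne hkm.ne (hkm.trans hij).ne]
        simp [hkm, hF k m hkm hkm, hF k j hkm (hkm.trans hij)]
      · simp [hkm]
    · rw [Equiv.swap_apply_of_ne_of_ne hmi hmj]
      have n1 : w m ≠ w i := fun h => hmi (w.injective h)
      have n2 : w m ≠ w j := fun h => hmj (w.injective h)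
      by_cases hki : k = i
      · subst hki
        rw [Equiv.swap_apply_left]
        split_ifs with h3
        · simp only [mem_insert, true_or, iff_true]
          refine ⟨h3.2, ?_⟩
          by_contra hc
          have : m < k := lt_of_le_of_ne (not_lt.mp hc) hmi
          exact lt_asymm h3.2 (hF m j this (this.trans hij))
        · rw [mem_col]
          constructor
          · rintro ⟨a, b⟩
            refine ⟨?_, b⟩
            by_contra hc
            exact h3 ⟨lt_of_le_of_ne (not_lt.mp hc) n1.symm, a⟩
          · rintro ⟨a, b⟩
            exact ⟨a.trans hw, b⟩
      · by_cases hkj : k = j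
        · subst hkj
          rw [Equiv.swap_apply_right]
          split_ifs with h3
          · simp only [mem_insert, hki, mem_erase, ne_eq, not_true, false_and, or_false, iff_false]
            rintro ⟨a, -⟩
            exact lt_asymm a h3.1
          · rw [mem_col]
            constructor
            · rintro ⟨a, b⟩
              exact ⟨a.trans hw, b⟩
            · rintro ⟨a, b⟩
              refine ⟨?_, b⟩
              by_contra hc
              exact h3 ⟨lt_of_le_of_ne (not_lt.mp hc) n1.symm, a⟩
        · rw [Equiv.swap_apply_of_ne_of_ne hki hkj]
          split_ifs with h3
          · simp [hki, hkj, mem_col]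
          · rw [mem_col]

/-- indicator -/
def chi (B : Finset (Fin n)) (x : Fin n) : ℕ := if x ∈ B then 1 else 0

lemma col_facts (w : Equiv.Perm (Fin n)) (i j : Fin n) (h1 : ∀ k < i, w k = Fin.rev k)
    (hj : j ∈ covSet w i) (m : Fin n) (hm : w i < w m) (hm' : w m ≤ w j) :
    i < m ∧ j ≤ m ∧ (∀ x < i, x ∈ colSet (rothe w) (w m)) ∧ i ∉ colSet (rothe w) (w m) ∧
      (∀ x < j, x ∈ colSet (rothe w) (w m) ↔ x ∈ colSet (rothe w) (w j)) := by
  simp only [covSet, mem_filter, mem_univ, true_and] at hj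
  obtain ⟨hij, hw, hcov⟩ := hj
  have hF := stair_gt w i h1
  have him : i < m := by
    by_contra hc
    rcases (not_lt.mp hc).lt_or_eq with h | h
    · exact absurd (hF m j h (h.trans hij)) (not_lt.mpr hm')
    · rw [h] at hm; exact lt_irrefl _ hm
  have hjm : j ≤ m := by
    by_contra hc
    have hc' := not_le.mp hc
    have := not_lt.mp (hcov m him hc' hm)
    exact hc'.ne (w.injective (le_antisymm hm' this))
  refine ⟨him, hjm, ?_, ?_, ?_⟩
  · intro x hx
    rw [mem_col]
    exact ⟨hF x m hx (hx.trans him), hx.trans him⟩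
  · rw [mem_col]
    exact fun h => lt_asymm h.1 hm
  · intro x hx
    rw [mem_col, mem_col]
    simp only [hx, hx.trans_le hjm, and_true]
    constructor
    · intro h
      rcases lt_trichotomy x i with h3 | h3 | h3
      · exact hF x j h3 hx
      · rw [h3] at h; exact absurd h (lt_asymm hm)
      · exact lt_of_le_of_ne (not_lt.mp (hcov x h3 hx (hm.trans h)))
          (fun h => hx.ne (w.injective h).symm)
    · intro h; exact hm'.trans_lt h

lemma supp_step (w : Equiv.Perm (Fin n)) (i j : Fin n) (h1 : ∀ k < i, w k = Fin.rev k)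
    (hj : j ∈ covSet w i) (B' : Fin n → Finset (Fin n))
    (hB' : ∀ c, CLE (B' c) (colSet (rothe (w * Equiv.swap i j)) c)) :
    ∃ B : Fin n → Finset (Fin n), (∀ c, CLE (B c) (colSet (rothe w) c)) ∧
      ∀ x, ∑ c, chi (B' c) x = ∑ c, chi (B c) x + if x = i then 1 else 0 := by
  have hj' := hj
  simp only [covSet, mem_filter, mem_univ, true_and] at hj'
  obtain ⟨hij, hw, hcov⟩ := hj'
  have key : ∀ c, CLE (B' (Equiv.swap (w i) (w j) c))
      (colSet (rothe (w * Equiv.swap i j)) (Equiv.swap (w i) (w j) c)) := fun c => hB' _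
  refine ⟨fun c => if c = w j then (B' (Equiv.swap (w i) (w j) c)).erase i
    else B' (Equiv.swap (w i) (w j) c), ?_, ?_⟩
  · intro c
    obtain ⟨m, rfl⟩ := w.surjective c
    beta_reduce
    have k1 := key (w m)
    rw [col_swap w i j h1 hj m] at k1
    by_cases hm : m = j
    · subst hm
      have F := col_facts w i m h1 hj m hw le_rfl
      rw [if_pos rfl] at k1 ⊢
      exact (cle_insert _ _ i F.2.2.2.1 F.2.2.1 k1).2
    · rw [if_neg hm] at k1
      rw [if_neg (fun h => hm (w.injective h))]
      split_ifs at k1 with h3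
      · have F := col_facts w i j h1 hj m h3.1 h3.2.le
        have hjm : j < m := lt_of_le_of_ne F.2.1 (Ne.symm hm)
        refine cle_exchange _ _ i j F.2.2.2.1 hij ?_ k1
        rw [mem_col]
        exact ⟨h3.2, hjm⟩
      · exact k1
  · intro x
    rw [← Equiv.sum_comp (Equiv.swap (w i) (w j)) (fun c => chi (B' c) x)]
    rw [← Finset.add_sum_erase _ _ (mem_univ (w j)),
      ← Finset.add_sum_erase (a := w j) univ (fun c => chi (if c = w j then
        (B' (Equiv.swap (w i) (w j) c)).erase i else B' (Equiv.swap (w i) (w j) c)) x) (mem_univ _)]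
    have hi : i ∈ B' (Equiv.swap (w i) (w j) (w j)) := by
      have k1 := key (w j)
      rw [col_swap w i j h1 hj j, if_pos rfl] at k1
      have F := col_facts w i j h1 hj j hw le_rfl
      exact (cle_insert _ _ i F.2.2.2.1 F.2.2.1 k1).1
    have hrest : ∑ c ∈ univ.erase (w j), chi (if c = w j then
        (B' (Equiv.swap (w i) (w j) c)).erase i else B' (Equiv.swap (w i) (w j) c)) x
        = ∑ c ∈ univ.erase (w j), chi (B' (Equiv.swap (w i) (w j) c)) x := by
      apply sum_congr rfl
      intro c hc
      rw [if_neg (ne_of_mem_erase hc)]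
    rw [hrest, if_pos rfl]
    by_cases hx : x = i
    · subst hx
      simp only [chi, hi, mem_erase]
      simp; omega
    · simp only [chi, mem_erase]
      simp [hx]

lemma greedy_stable (r : Equiv.Perm (Fin n)) (S : Finset (Fin n)) (t : ℕ) (ht : t ≤ n)
    (h : ∀ x ∈ S, (x : ℕ) < t) : greedy r S n = greedy r S t := by
  symm
  apply eq_of_subset_of_card_le (greedy_mono r S ht)
  rw [(greedy_basic r S n).2, (greedy_basic r S t).2, cnt_n]
  unfold cnt
  apply card_le_card
  intro x hx
  rw [mem_filter]
  exact ⟨hx, h x hx⟩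

lemma greedy_segment (r : Equiv.Perm (Fin n)) (S : Finset (Fin n)) (t : ℕ) (ht : t ≤ n)
    (h : ∀ x : Fin n, x ∈ S ↔ (x : ℕ) < t) : greedy r S n = S := by
  rw [greedy_stable r S t ht (fun x hx => (h x).mp hx),
    greedy_init r S t (fun x hx => (h x).mpr hx)]
  ext x
  simp [h x]

lemma vertex_step (w : Equiv.Perm (Fin n)) (i : Fin n) (h1 : ∀ k < i, w k = Fin.rev k)
    (h2 : w i ≠ Fin.rev i) (r : Equiv.Perm (Fin n)) :
    ∃ j ∈ covSet w i, ∀ x,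
      ∑ c, chi (greedy r (colSet (rothe (w * Equiv.swap i j)) c) n) x =
      ∑ c, chi (greedy r (colSet (rothe w) c) n) x + if x = i then 1 else 0 := by
  have hF := stair_gt w i h1
  have hlt := lt_rev_of w i h1 h2
  have htop : i ∉ greedy r (colSet (rothe w) (Fin.rev i)) n := by
    obtain ⟨p, hp⟩ := w.surjective (Fin.rev i)
    have hip : i < p := by
      rcases lt_trichotomy p i with h3 | h3 | h3
      · have := h1 p h3
        rw [this] at hp
        exact absurd (Fin.rev_injective hp) h3.ne
      · subst h3; exact absurd hp h2
      · exact h3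
    rw [greedy_segment r _ i i.isLt.le]
    · rw [← hp, mem_col, hp]
      exact fun h => lt_asymm h.1 hlt
    · intro x
      rw [← hp, mem_col, hp]
      constructor
      · rintro ⟨a, _⟩
        have h6 : Fin.rev (w x) < i := by
          rw [← Fin.rev_lt_rev]; simpa using a
        have := h1 _ h6
        rw [Fin.rev_rev] at this
        rw [w.injective this] at h6
        exact h6
      · intro hx
        have hx' : x < i := hx
        refine ⟨?_, hx'.trans hip⟩
        rw [← hp]
        exact hF x p hx' (hx'.trans hip)
  obtain ⟨b, ⟨hb1, hb2⟩, hmin⟩ := WellFounded.has_min (wellFounded_lt (α := Fin n))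
    {c | w i < c ∧ i ∉ greedy r (colSet (rothe w) c) n} ⟨Fin.rev i, hlt, htop⟩
  have hmin' : ∀ c, w i < c → c < b → i ∈ greedy r (colSet (rothe w) c) n := by
    intro c hc hcb
    by_contra h
    exact hmin c ⟨hc, h⟩ hcb
  have hbrev : b ≤ Fin.rev i := not_lt.mp (hmin _ ⟨hlt, htop⟩)
  obtain ⟨j, rfl⟩ := w.surjective b
  have hij : i < j := by
    rcases lt_trichotomy j i with h3 | h3 | h3
    · rw [h1 j h3, Fin.rev_le_rev] at hbrev
      exact absurd h3 (not_lt.mpr hbrev)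
    · subst h3; exact absurd hb1 (lt_irrefl _)
    · exact h3
  have hcovj : j ∈ covSet w i := by
    simp only [covSet, mem_filter, mem_univ, true_and]
    refine ⟨hij, hb1, fun l hl hl' h3 h4 => ?_⟩
    obtain ⟨k, ⟨k1, k2, k3, k4⟩, kmin⟩ := WellFounded.has_min (wellFounded_lt (α := Fin n))
      {k | i < k ∧ k < j ∧ w i < w k ∧ w k < w j} ⟨l, hl, hl', h3, h4⟩
    have hk := hmin' (w k) k3 k4
    rw [greedy_stable r _ k k.isLt.le (fun x hx => ((mem_col w x k).mp hx).2),
      greedy_congr r _ (colSet (rothe w) (w j)) k] at hk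
    · exact hb2 (greedy_mono r _ k.isLt.le hk)
    · intro x hx
      have hx : x < k := hx
      rw [mem_col, mem_col]
      simp only [hx, hx.trans k2, and_true]
      constructor
      · intro h
        rcases lt_trichotomy x i with h3 | h3 | h3
        · exact hF x j h3 (h3.trans hij)
        · rw [h3] at h; exact absurd h (lt_asymm k3)
        · by_contra hc
          have : w x < w j := lt_of_le_of_ne (not_lt.mp hc)
            (fun h => (hx.trans k2).ne (w.injective h))
          exact kmin x ⟨h3, hx.trans k2, k3.trans h, this⟩ hx
      · intro h; exact k4.trans h
  refine ⟨j, hcovj, fun x => ?_⟩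
  rw [← Equiv.sum_comp (Equiv.swap (w i) (w j))
    (fun c => chi (greedy r (colSet (rothe (w * Equiv.swap i j)) c) n) x)]
  rw [← Finset.add_sum_erase _ _ (mem_univ (w j)),
      ← Finset.add_sum_erase (a := w j) univ
        (fun c => chi (greedy r (colSet (rothe w) c) n) x) (mem_univ _)]
  have hrest : ∀ c ∈ univ.erase (w j),
      chi (greedy r (colSet (rothe (w * Equiv.swap i j)) (Equiv.swap (w i) (w j) c)) n) x
      = chi (greedy r (colSet (rothe w) c) n) x := by
    intro c hc
    obtain ⟨m, rfl⟩ := w.surjective c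
    have hm : m ≠ j := by rintro rfl; simp at hc
    rw [col_swap w i j h1 hcovj m, if_neg hm]
    split_ifs with h3
    · have F := col_facts w i j h1 hcovj m h3.1 h3.2.le
      have hjm : j < m := lt_of_le_of_ne F.2.1 (Ne.symm hm)
      rw [greedy_exchange' r _ i j F.2.2.1 F.2.2.2.1 hij]
      · rw [mem_col]; exact ⟨h3.2, hjm⟩
      · rw [greedy_congr r _ (colSet (rothe w) (w j)) j (fun x hx => F.2.2.2.2 x hx)]
        exact fun h => hb2 (greedy_mono r _ j.isLt.le h)
      · exact hmin' _ h3.1 h3.2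
    · rfl
  rw [sum_congr rfl hrest, col_swap w i j h1 hcovj j, if_pos rfl]
  have F := col_facts w i j h1 hcovj j hb1 le_rfl
  rw [greedy_insert r (colSet (rothe w) (w j)) _ i F.2.2.1 F.2.2.2.1 n i.isLt
    (fun x _ => by rw [mem_insert]) hb2]
  by_cases hx : x = i
  · subst hx
    simp [chi, hb2]; omega
  · simp [chi, hx]

end columns

section final

variable {n : ℕ}

lemma cnt_emb (S : Finset (Fin n)) {m : ℕ} (h : S.card = m) (t : ℕ) :
    cnt S t = (univ.filter fun k : Fin m => (S.orderEmbOfFin h k : ℕ) < t).card := by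
  unfold cnt
  conv_lhs => rw [← S.map_orderEmbOfFin_univ h]
  rw [Finset.filter_map, card_map]
  rfl

lemma domLE_iff (R S : Finset (Fin n)) : DomLE R S ↔ CLE R S := by
  have key : DomLE R S ↔ ∃ h : R.card = S.card, ∀ k : Fin S.card,
      R.orderEmbOfFin h k ≤ S.orderEmbOfFin rfl k := by
    constructor
    · rintro ⟨h, h'⟩
      refine ⟨h, fun k => ?_⟩
      rw [orderEmbOfFin_apply, orderEmbOfFin_apply]
      exact h' k (by rw [length_sort, h]; exact k.isLt) (by rw [length_sort]; exact k.isLt)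
    · rintro ⟨h, h'⟩
      refine ⟨h, fun k hR hS => ?_⟩
      have hS' := hS
      rw [length_sort] at hS'
      have := h' ⟨k, hS'⟩
      rw [orderEmbOfFin_apply, orderEmbOfFin_apply] at this
      exact this
  rw [key]
  constructor
  · rintro ⟨h, h'⟩
    refine ⟨h, fun t => ?_⟩
    rw [cnt_emb S rfl, cnt_emb R h]
    apply card_le_card
    intro k hk
    simp only [mem_filter, mem_univ, true_and] at hk ⊢
    have := Fin.le_def.mp (h' k)
    omega
  · rintro ⟨h, h'⟩
    refine ⟨h, fun k => ?_⟩
    by_contra hc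
    have hc' := not_le.mp hc
    have h1 := h' ((S.orderEmbOfFin rfl k : ℕ) + 1)
    rw [cnt_emb S rfl, cnt_emb R h] at h1
    have h2 : (Finset.Iic k).card ≤
        (univ.filter fun l : Fin S.card => (S.orderEmbOfFin rfl l : ℕ) <
          (S.orderEmbOfFin rfl k : ℕ) + 1).card := by
      apply card_le_card
      intro l hl
      simp only [mem_filter, mem_univ, true_and, mem_Iic] at hl ⊢
      have := Fin.le_def.mp ((S.orderEmbOfFin rfl).monotone hl)
      omega
    have h3 : (univ.filter fun l : Fin S.card => (R.orderEmbOfFin h l : ℕ) <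
          (S.orderEmbOfFin rfl k : ℕ) + 1).card ≤ (Finset.Iio k).card := by
      apply card_le_card
      intro l hl
      simp only [mem_filter, mem_univ, true_and, mem_Iio] at hl ⊢
      by_contra hlk
      have := Fin.le_def.mp ((R.orderEmbOfFin h).monotone (not_lt.mp hlk))
      have := Fin.lt_def.mp hc'
      omega
    rw [Fin.card_Iic] at h2
    rw [Fin.card_Iio] at h3
    omega

lemma main_induction (Schub : Equiv.Perm (Fin n) → MvPolynomial (Fin n) ℤ)
    (hbase : Schub Fin.revPerm = ∏ i : Fin n, X i ^ (n - 1 - (i : ℕ)))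
    (hrec : ∀ (w : Equiv.Perm (Fin n)) (i j : Fin n), (i : ℕ) + 1 = (j : ℕ) → w i < w j →
      (X i - X j) * Schub w =
        Schub (w * Equiv.swap i j) -
          rename (Equiv.swap i j) (Schub (w * Equiv.swap i j))) :
    ∀ (N : ℕ) (w : Equiv.Perm (Fin n)), swPhi w < N →
      (∀ d, 0 ≤ coeff d (Schub w)) ∧
      (∀ d, coeff d (Schub w) ≠ 0 → ∃ B : Fin n → Finset (Fin n),
        (∀ c, CLE (B c) (colSet (rothe w) c)) ∧ ∀ x, d x = ∑ c, chi (B c) x) ∧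
      (∀ (r : Equiv.Perm (Fin n)) (d : Fin n →₀ ℕ),
        (∀ x, d x = ∑ c, chi (greedy r (colSet (rothe w) c) n) x) → coeff d (Schub w) ≠ 0) := by
  intro N
  induction N with
  | zero => intro w h; omega
  | succ N ih =>
  intro w hN
  by_cases hw0 : w = Fin.revPerm
  · subst hw0
    have hcol : ∀ c x : Fin n, x ∈ colSet (rothe (Fin.revPerm : Equiv.Perm (Fin n))) c ↔
        (x : ℕ) < n - 1 - c := by
      intro c x
      have := mem_col (Fin.revPerm : Equiv.Perm (Fin n)) x (Fin.rev c)
      simp only [Fin.revPerm_apply, Fin.rev_rev] at this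
      rw [this, Fin.lt_def, Fin.lt_def, Fin.val_rev, Fin.val_rev]
      omega
    set δ : Fin n →₀ ℕ := Finsupp.equivFunOnFinite.symm (fun i => n - 1 - (i : ℕ)) with hδ
    have hmon : Schub Fin.revPerm = monomial δ 1 := by
      rw [hbase, monomial_eq]
      simp [Finsupp.prod_fintype, hδ]
    have hsum : ∀ x, δ x = ∑ c, chi (colSet (rothe (Fin.revPerm : Equiv.Perm (Fin n))) c) x := by
      intro x
      simp only [chi, hcol]
      rw [← Finset.card_filter]
      have : (univ.filter fun c : Fin n => (x : ℕ) < n - 1 - c) = Finset.Iio (Fin.rev x) := by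
        ext c
        simp only [mem_filter, mem_univ, true_and, mem_Iio, Fin.lt_def, Fin.val_rev]
        omega
      rw [this, Fin.card_Iio, Fin.val_rev]
      simp [hδ]
      omega
    rw [hmon]
    refine ⟨?_, ?_, ?_⟩
    · intro d
      rw [coeff_monomial]
      split_ifs <;> simp
    · intro d hd
      rw [coeff_monomial] at hd
      have hd' : δ = d := by
        by_contra hc
        simp [hc] at hd
      subst hd'
      exact ⟨_, fun c => cle_refl _, hsum⟩
    · intro r d hd
      have : δ = d := by
        ext x
        rw [hd x, hsum x]
        apply sum_congr rfl
        intro c _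
        rw [greedy_segment r _ (n - 1 - c) (by omega) (hcol c)]
      rw [this]
      simp
  · obtain ⟨i, h1, h2⟩ := exists_first w hw0
    have hco := cotrans Schub hbase hrec _ w i (Nat.lt_succ_self _) h1 h2
    have hcoeff : ∀ d, coeff d (Schub w) =
        ∑ j ∈ covSet w i, coeff (Finsupp.single i 1 + d) (Schub (w * Equiv.swap i j)) := by
      intro d
      rw [← coeff_X_mul d i (Schub w), hco, coeff_sum]
    have ih' : ∀ j ∈ covSet w i, _ := fun j hj => ih (w * Equiv.swap i j) (by
      simp only [covSet, mem_filter, mem_univ, true_and] at hj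
      exact lt_of_lt_of_le (swPhi_lt w i j hj.1 hj.2.1) (by omega))
    refine ⟨?_, ?_, ?_⟩
    · intro d
      rw [hcoeff]
      exact sum_nonneg fun j hj => (ih' j hj).1 _
    · intro d hd
      rw [hcoeff] at hd
      obtain ⟨j, hj, hne⟩ := exists_ne_zero_of_sum_ne_zero hd
      obtain ⟨B', hB', hs⟩ := (ih' j hj).2.1 _ hne
      obtain ⟨B, hB, hs'⟩ := supp_step w i j h1 hj B' hB'
      refine ⟨B, hB, fun x => ?_⟩
      have e1 := hs x
      rw [hs' x] at e1
      simp only [Finsupp.add_apply, Finsupp.single_apply, eq_comm (a := i)] at e1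
      omega
    · intro r d hd
      obtain ⟨j, hj, hs⟩ := vertex_step w i h1 h2 r
      have hne := (ih' j hj).2.2 r (Finsupp.single i 1 + d) (fun x => by
        rw [hs x, ← hd x]
        simp only [Finsupp.add_apply, Finsupp.single_apply, eq_comm (a := i)]
        omega)
      rw [hcoeff]
      apply ne_of_gt
      apply sum_pos' (fun j hj => (ih' j hj).1 _)
      exact ⟨j, hj, lt_of_le_of_ne ((ih' j hj).1 _) (Ne.symm hne)⟩

lemma indVec_eq_chi (B : Finset (Fin n)) (x : Fin n) : indVec B x = (chi B x : ℝ) := by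
  simp [indVec, chi]

lemma smPolytope_le (S : Finset (Fin n)) (f : (Fin n → ℝ) →L[ℝ] ℝ) (r : Equiv.Perm (Fin n))
    (hf : ∀ x y, r x ≤ r y → f (Pi.single x 1) ≤ f (Pi.single y 1)) (q : Fin n → ℝ)
    (hq : q ∈ smPolytope S) : f q ≤ f (indVec (greedy r S n)) := by
  have hval : ∀ B : Finset (Fin n), f (indVec B) = ∑ x ∈ B, f (Pi.single x 1) := by
    intro B
    rw [← map_sum]
    congr 1
    ext y
    simp [indVec, Finset.sum_apply, Pi.single_apply]
  have hsub : smPolytope S ⊆ {y | f y ≤ f (indVec (greedy r S n))} := by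
    apply convexHull_min
    · rintro _ ⟨B, hB, rfl⟩
      simp only [Set.mem_setOf_eq]
      rw [hval, hval]
      exact greedy_opt' r (fun x => f (Pi.single x 1)) hf S B ((domLE_iff B S).mp hB)
    · exact convex_halfSpace_le f.toLinearMap.isLinear _
  exact hsub hq

end final

/-- The Newton polytope of the Schubert polynomial `𝔖_w` equals the Minkowski sum of
Schubert matroid polytopes `Σ_{j=1}^n P(SM_n(D(w)_j))` of the columns of the Rothe
diagram of `w`. -/
theorem stmt9 (n : ℕ) (Schub : Equiv.Perm (Fin n) → MvPolynomial (Fin n) ℤ)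
    -- `𝔖_{w₀} = x_1^{n-1} x_2^{n-2} ⋯ x_{n-1}` for the longest permutation `w₀`.
    (hbase : Schub Fin.revPerm = ∏ i : Fin n, X i ^ (n - 1 - (i : ℕ)))
    -- For adjacent positions `i, j = i+1` with `w(i) < w(j)`: `𝔖_w = ∂_i 𝔖_{w sᵢ}`, i.e.
    -- `(xᵢ - xⱼ) ⬝ 𝔖_w = 𝔖_{w sᵢ} - sᵢ ⬝ 𝔖_{w sᵢ}`.
    (hrec : ∀ (w : Equiv.Perm (Fin n)) (i j : Fin n), (i : ℕ) + 1 = (j : ℕ) → w i < w j →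
      (X i - X j) * Schub w =
        Schub (w * Equiv.swap i j) -
          rename (Equiv.swap i j) (Schub (w * Equiv.swap i j)))
    (w : Equiv.Perm (Fin n)) :
    newtonPolytope (Schub w) = ∑ j : Fin n, smPolytope (colSet (rothe w) j) := by
  have H := main_induction Schub hbase hrec _ w (Nat.lt_succ_self _)
  apply Set.Subset.antisymm
  · apply convexHull_min
    · rintro _ ⟨d, hd, rfl⟩
      obtain ⟨B, hB, hs⟩ := H.2.1 d (by simpa using hd)
      have he : (fun i : Fin n => ((d i : ℕ) : ℝ)) = ∑ c, indVec (B c) := by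
        ext x
        rw [hs x, Finset.sum_apply]
        push_cast
        exact Finset.sum_congr rfl fun c _ => (indVec_eq_chi _ _).symm
      show (fun i : Fin n => ((d i : ℕ) : ℝ)) ∈ _
      rw [he]
      apply Set.finsetSum_mem_finsetSum
      intro c _
      apply subset_convexHull
      exact ⟨B c, (domLE_iff _ _).mpr (hB c), rfl⟩
    · unfold smPolytope
      rw [← convexHull_sum]
      exact convex_convexHull _ _
  · intro q hq
    by_contra hnot
    have hfin : ((fun (d : Fin n →₀ ℕ) (i : Fin n) => ((d i : ℕ) : ℝ)) ''
        (↑(Schub w).support : Set (Fin n →₀ ℕ))).Finite :=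
      (Finset.finite_toSet _).image _
    obtain ⟨f, u, hu1, hu2⟩ := geometric_hahn_banach_closed_point
      (convex_convexHull ℝ _) (hfin.isClosed_convexHull ℝ) hnot
    let g : Fin n → ℝ := fun x => f (Pi.single x 1)
    let r : Equiv.Perm (Fin n) := (Tuple.sort g).symm
    have hr : ∀ x y, r x ≤ r y → g x ≤ g y := by
      intro x y hxy
      have := Tuple.monotone_sort g hxy
      simpa [r] using this
    let d : Fin n →₀ ℕ := Finsupp.equivFunOnFinite.symm
      (fun x => ∑ c, chi (greedy r (colSet (rothe w) c) n) x)
    have hd := H.2.2 r d (fun x => rfl)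
    have hlt := hu1 (fun i => ((d i : ℕ) : ℝ))
      (subset_convexHull ℝ _ ⟨d, by simpa using hd, rfl⟩)
    have he : (fun i : Fin n => ((d i : ℕ) : ℝ))
        = ∑ c, indVec (greedy r (colSet (rothe w) c) n) := by
      ext x
      rw [Finset.sum_apply]
      simp only [d, Finsupp.equivFunOnFinite_symm_apply_apply]
      push_cast
      exact Finset.sum_congr rfl fun c _ => (indVec_eq_chi _ _).symm
    rw [he, map_sum] at hlt
    obtain ⟨q', hq', rfl⟩ := (Set.mem_finsetSum _ _ _).mp hq
    rw [map_sum] at hu2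
    have hle : ∑ c, f (q' c) ≤ ∑ c, f (indVec (greedy r (colSet (rothe w) c) n)) :=
      Finset.sum_le_sum fun c _ => smPolytope_le _ f r hr _ (hq' (Finset.mem_univ c))
    linarith
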